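/- Let u : X → ℝ be an upper semicontinuous function. Then u is continuous on X and S-subharmonic on X if and only if there exists a sequence (u_j) of functions in S that increases pointwise to u on X. -/

import Mathlib

/-!
For continuous `f` let `E f z` (`lowerEnvelope S f z`) be the supremum of `v z` over the minorants
`v ∈ S` of `f`. Edwards' theorem says that `E f z` is the least value of `∫ f dμ` over the Jensen
measures `μ` at `z`. Indeed, `E · z` is superlinear, so by Hahn–Banach some linear functional on
`C(α, ℝ)` dominates it and agrees with it at `f`. Since `S` contains the constants, this functional
is positive and maps `1` to `1`; by Riesz–Markov–Kakutani it is integration against a probability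
measure, which is a Jensen measure because `v z ≤ E v z` for `v ∈ S`.

Hence a continuous `u` is `S`-subharmonic if and only if `E u = u`. In that case the minorants of
`u` in `S`, which are directed upwards because `S` is stable under maxima, converge to `u`
pointwise, hence uniformly by Dini's theorem, and a sequence can be extracted.
-/

open MeasureTheory Topology Filter
open scoped ENNReal

/-- The nonnegative part of an extended real number, as an element of `ℝ≥0∞`. -/
noncomputable def erealToENNReal (a : EReal) : ℝ≥0∞ :=
  if a = ⊤ then ⊤ else ENNReal.ofReal a.toReal

/-- The (upper) integral of a function with values in `[-∞, ∞]`, defined as the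
difference of the lower integrals of its positive and negative parts. -/
noncomputable def erealIntegral {α : Type*} [MeasurableSpace α]
    (μ : Measure α) (u : α → EReal) : EReal :=
  ((∫⁻ x, erealToENNReal (u x) ∂μ : ℝ≥0∞) : EReal) -
    ((∫⁻ x, erealToENNReal (-(u x)) ∂μ : ℝ≥0∞) : EReal)

/-- `μ` is a Jensen measure with barycenter `z` with respect to the family `S` of
(continuous real-valued) functions: a Borel probability measure such that
`u z ≤ ∫ u dμ` for every `u ∈ S`. -/
def IsJensenMeasure {α : Type*} [MeasurableSpace α]
    (S : Set (α → ℝ)) (z : α) (μ : Measure α) : Prop :=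
  IsProbabilityMeasure μ ∧ ∀ u ∈ S, u z ≤ ∫ x, u x ∂μ

/-- A function `u : α → [-∞, ∞)` is `S`-subharmonic if it is upper semicontinuous
and satisfies `u z ≤ ∫ u dμ` for every `z` and every Jensen measure `μ` with
barycenter `z` w.r.t. `S`. -/
def IsSSubharmonic {α : Type*} [TopologicalSpace α] [MeasurableSpace α]
    (S : Set (α → ℝ)) (u : α → EReal) : Prop :=
  UpperSemicontinuous u ∧ (∀ x, u x ≠ ⊤) ∧
    ∀ z : α, ∀ μ : Measure α, IsJensenMeasure S z μ → u z ≤ erealIntegral μ u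

section RealValued

variable {α : Type*} [MeasurableSpace α]

lemma erealToENNReal_coe (r : ℝ) : erealToENNReal (r : EReal) = ENNReal.ofReal r := by
  simp [erealToENNReal]

lemma erealIntegral_coe {μ : Measure α} {f : α → ℝ} (hf : Integrable f μ) :
    erealIntegral μ (fun x => (f x : EReal)) = ((∫ x, f x ∂μ : ℝ) : EReal) := by
  have lintegral_ne_top {g : α → ℝ} (hg : Integrable g μ) : ∫⁻ x, ENNReal.ofReal (g x) ∂μ ≠ ⊤ :=
    hg.lintegral_lt_top.ne
  rw [integral_eq_lintegral_pos_part_sub_lintegral_neg_part hf, EReal.coe_sub,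
    EReal.coe_ennreal_toReal (lintegral_ne_top hf),
    EReal.coe_ennreal_toReal (lintegral_ne_top hf.fun_neg)]
  simp only [erealIntegral, ← EReal.coe_neg, erealToENNReal_coe]

variable [TopologicalSpace α] [CompactSpace α] [OpensMeasurableSpace α]

lemma integrable_of_continuous (μ : Measure α) [IsFiniteMeasure μ] {f : α → ℝ} (hf : Continuous f) :
    Integrable f μ :=
  hf.integrable_of_hasCompactSupport (HasCompactSupport.of_compactSpace f)

lemma isSSubharmonic_coe_iff {S : Set (α → ℝ)} {u : α → ℝ} (hu : Continuous u) :
    IsSSubharmonic S (fun x => (u x : EReal)) ↔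
      ∀ z μ, IsJensenMeasure S z μ → u z ≤ ∫ x, u x ∂μ := by
  have le_iff (z : α) (μ : Measure α) (hμ : IsJensenMeasure S z μ) :
      (u z : EReal) ≤ erealIntegral μ (fun x => (u x : EReal)) ↔ u z ≤ ∫ x, u x ∂μ := by
    have := hμ.1
    rw [erealIntegral_coe (integrable_of_continuous μ hu), EReal.coe_le_coe_iff]
  constructor
  · rintro ⟨-, -, hsub⟩ z μ hμ
    exact (le_iff z μ hμ).1 (hsub z μ hμ)
  · intro hsub
    exact ⟨(continuous_coe_real_ereal.comp hu).upperSemicontinuous, fun x => EReal.coe_ne_top _,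
      fun z μ hμ => (le_iff z μ hμ).2 (hsub z μ hμ)⟩

end RealValued

section Functionals

lemma exists_linearMap_eq_of_sublinear {E : Type*} [AddCommGroup E] [Module ℝ E] {N : E → ℝ}
    (N_smul : ∀ c : ℝ, 0 < c → ∀ x, N (c • x) = c * N x)
    (N_add : ∀ x y, N (x + y) ≤ N x + N y) (x₀ : E) :
    ∃ L : E →ₗ[ℝ] ℝ, L x₀ = N x₀ ∧ ∀ x, L x ≤ N x := by
  have N_zero : N 0 = 0 := by
    have := N_smul 2 two_pos 0
    rw [smul_zero] at this
    linarith
  have mul_le_smul (c : ℝ) : c * N x₀ ≤ N (c • x₀) := by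
    rcases lt_trichotomy c 0 with hc | rfl | hc
    · have hneg : N (-c • x₀) = -c * N x₀ := N_smul (-c) (neg_pos.2 hc) x₀
      have hadd := N_add (c • x₀) (-c • x₀)
      rw [← add_smul, add_neg_cancel, zero_smul, N_zero, hneg] at hadd
      linarith
    · simp [N_zero]
    · exact (N_smul c hc x₀).ge
  have smul_eq_zero_of_smul (c : ℝ) (h : c • x₀ = 0) : c • N x₀ = 0 := by
    rcases smul_eq_zero.1 h with rfl | rfl
    · exact zero_smul ℝ _
    · rw [N_zero, smul_zero]
  obtain ⟨L, hL, hLN⟩ := exists_extension_of_le_sublinear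
    (LinearPMap.mkSpanSingleton' (σ := RingHom.id ℝ) x₀ (N x₀) smul_eq_zero_of_smul) N N_smul N_add
    (by
      rintro ⟨x, hx⟩
      obtain ⟨c, rfl⟩ := Submodule.mem_span_singleton.1 hx
      rw [LinearPMap.mkSpanSingleton'_apply]
      exact mul_le_smul c)
  refine ⟨L, ?_, hLN⟩
  exact (hL ⟨x₀, Submodule.mem_span_singleton_self x₀⟩).trans
    (LinearPMap.mkSpanSingleton'_apply_self x₀ (N x₀) smul_eq_zero_of_smul _)

lemma exists_isProbabilityMeasure_integral_eq {α : Type*} [TopologicalSpace α] [CompactSpace α]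
    [T2Space α] [MeasurableSpace α] [BorelSpace α] (L : C(α, ℝ) →ₗ[ℝ] ℝ)
    (L_nonneg : ∀ f, 0 ≤ f → 0 ≤ L f) (L_one : L 1 = 1) :
    ∃ μ : Measure α, IsProbabilityMeasure μ ∧ ∀ f : C(α, ℝ), ∫ x, f x ∂μ = L f := by
  let Λ : CompactlySupportedContinuousMap α ℝ →ₚ[ℝ] ℝ := PositiveLinearMap.mk₀
    { toFun := fun f => L f.toContinuousMap
      map_add' := fun f g => L.map_add f.toContinuousMap g.toContinuousMap
      map_smul' := fun c f => L.map_smul c f.toContinuousMap }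
    (fun f hf => L_nonneg f.toContinuousMap hf)
  have integral_eq (f : C(α, ℝ)) : ∫ x, f x ∂(RealRMK.rieszMeasure Λ) = L f :=
    RealRMK.integral_rieszMeasure Λ (CompactlySupportedContinuousMap.continuousMapEquiv f)
  refine ⟨RealRMK.rieszMeasure Λ, ⟨?_⟩, integral_eq⟩
  have measureReal_univ := integral_eq 1
  simp only [ContinuousMap.one_apply, integral_const, smul_eq_mul, mul_one, L_one]
    at measureReal_univ
  exact (ENNReal.toReal_eq_one_iff _).1 measureReal_univ

end Functionals

section LowerEnvelope

variable {α : Type*} {S : Set (α → ℝ)} {f g : α → ℝ} {z : α} {a : ℝ}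

/-- The lower envelope of `f`: the pointwise supremum of the minorants of `f` in `S`. As a real
supremum it takes the junk value `0` when `f` has no minorant in `S`. -/
noncomputable def lowerEnvelope (S : Set (α → ℝ)) (f : α → ℝ) (z : α) : ℝ :=
  ⨆ v : ↥(S ∩ Set.Iic f), v.1 z

lemma bddAbove_range_minorants (S : Set (α → ℝ)) (f : α → ℝ) (z : α) :
    BddAbove (Set.range fun v : ↥(S ∩ Set.Iic f) => v.1 z) :=
  ⟨f z, Set.forall_mem_range.2 fun v => v.2.2 z⟩

lemma le_lowerEnvelope {v : α → ℝ} (hv : v ∈ S) (hvf : v ≤ f) (z : α) :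
    v z ≤ lowerEnvelope S f z :=
  le_ciSup (bddAbove_range_minorants S f z) ⟨v, hv, hvf⟩

lemma lowerEnvelope_le (hf : (S ∩ Set.Iic f).Nonempty) (h : ∀ v ∈ S, v ≤ f → v z ≤ a) :
    lowerEnvelope S f z ≤ a :=
  have := hf.to_subtype
  ciSup_le fun v => h v.1 v.2.1 v.2.2

lemma lowerEnvelope_le_self (hf : (S ∩ Set.Iic f).Nonempty) (z : α) : lowerEnvelope S f z ≤ f z :=
  lowerEnvelope_le hf fun _ _ hvf => hvf z

lemma lowerEnvelope_add_lowerEnvelope_le (hadd : ∀ v ∈ S, ∀ w ∈ S, v + w ∈ S)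
    (hf : (S ∩ Set.Iic f).Nonempty) (hg : (S ∩ Set.Iic g).Nonempty) :
    lowerEnvelope S f z + lowerEnvelope S g z ≤ lowerEnvelope S (f + g) z := by
  rw [← le_sub_iff_add_le]
  refine lowerEnvelope_le hf fun v hv hvf => ?_
  rw [le_sub_comm]
  refine lowerEnvelope_le hg fun w hw hwg => ?_
  rw [le_sub_iff_add_le']
  exact le_lowerEnvelope (hadd v hv w hw) (add_le_add hvf hwg) z

lemma lowerEnvelope_smul (hsmul : ∀ v ∈ S, ∀ t : ℝ, 0 ≤ t → t • v ∈ S) {c : ℝ} (hc : 0 < c)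
    (f : α → ℝ) (z : α) : lowerEnvelope S (c • f) z = c * lowerEnvelope S f z := by
  rw [lowerEnvelope, lowerEnvelope, Real.mul_iSup_of_nonneg hc.le]
  let scale (v : ↥(S ∩ Set.Iic f)) : ↥(S ∩ Set.Iic (c • f)) :=
    ⟨c • v.1, hsmul v.1 v.2.1 c hc.le, smul_le_smul_of_nonneg_left (Set.mem_Iic.1 v.2.2) hc.le⟩
  have scale_surjective : Function.Surjective scale := by
    rintro ⟨w, hw, hwf⟩
    have hle : c⁻¹ • w ≤ f := (inv_smul_le_iff_of_pos hc).2 hwf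
    exact ⟨⟨c⁻¹ • w, hsmul w hw c⁻¹ (inv_nonneg.2 hc.le), hle⟩,
      Subtype.ext (smul_inv_smul₀ hc.ne' w)⟩
  exact (scale_surjective.iSup_congr scale fun _ => rfl).symm

lemma nonempty_minorants [TopologicalSpace α] [CompactSpace α] (hconst : ∀ c : ℝ, (fun _ => c) ∈ S)
    (hf : Continuous f) : (S ∩ Set.Iic f).Nonempty := by
  obtain ⟨c, hc⟩ := (isCompact_range hf).bddBelow
  exact ⟨fun _ => c, hconst c, fun x => hc ⟨x, rfl⟩⟩

lemma exists_linearMap_lowerEnvelope_le [TopologicalSpace α] [CompactSpace α]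
    (hconst : ∀ c : ℝ, (fun _ => c) ∈ S)
    (hadd : ∀ v ∈ S, ∀ w ∈ S, v + w ∈ S) (hsmul : ∀ v ∈ S, ∀ t : ℝ, 0 ≤ t → t • v ∈ S)
    (f₀ : C(α, ℝ)) (z : α) :
    ∃ L : C(α, ℝ) →ₗ[ℝ] ℝ, L f₀ = lowerEnvelope S f₀ z ∧
      ∀ f : C(α, ℝ), lowerEnvelope S f z ≤ L f := by
  have superadditive (f g : C(α, ℝ)) :
      lowerEnvelope S f z + lowerEnvelope S g z ≤ lowerEnvelope S (⇑(f + g)) z :=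
    lowerEnvelope_add_lowerEnvelope_le hadd (nonempty_minorants hconst f.continuous)
      (nonempty_minorants hconst g.continuous)
  obtain ⟨L, hL, L_le⟩ := exists_linearMap_eq_of_sublinear
    (N := fun f : C(α, ℝ) => -lowerEnvelope S (⇑(-f)) z)
    (fun c hc f => by
      rw [← smul_neg, ContinuousMap.coe_smul, lowerEnvelope_smul hsmul hc, mul_neg])
    (fun f g => by
      rw [neg_add f g]
      linarith [superadditive (-f) (-g)])
    (-f₀)
  refine ⟨L, ?_, fun f => ?_⟩
  · simpa only [map_neg, neg_neg, neg_inj] using hL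
  · simpa only [map_neg, neg_neg, neg_le_neg_iff] using L_le (-f)

end LowerEnvelope

section JensenDuality

variable {α : Type*} [TopologicalSpace α] [CompactSpace α] [MeasurableSpace α]
  {S : Set (α → ℝ)} {u : α → ℝ}

lemma IsJensenMeasure.lowerEnvelope_le_integral [OpensMeasurableSpace α] {z : α} {μ : Measure α}
    (hμ : IsJensenMeasure S z μ) (hS : ∀ v ∈ S, Continuous v) (hu : Continuous u)
    (hne : (S ∩ Set.Iic u).Nonempty) : lowerEnvelope S u z ≤ ∫ x, u x ∂μ :=
  have := hμ.1
  lowerEnvelope_le hne fun v hv hvu => (hμ.2 v hv).trans <|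
    integral_mono (integrable_of_continuous μ (hS v hv)) (integrable_of_continuous μ hu) hvu

variable [T2Space α] [BorelSpace α]
  (hS : ∀ v ∈ S, Continuous v) (hconst : ∀ c : ℝ, (fun _ => c) ∈ S)
  (hadd : ∀ v ∈ S, ∀ w ∈ S, v + w ∈ S) (hsmul : ∀ v ∈ S, ∀ t : ℝ, 0 ≤ t → t • v ∈ S)

include hS hconst hadd hsmul

lemma exists_isJensenMeasure_integral_eq_lowerEnvelope (hu : Continuous u) (z : α) :
    ∃ μ, IsJensenMeasure S z μ ∧ ∫ x, u x ∂μ = lowerEnvelope S u z := by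
  obtain ⟨L, hLu, le_L⟩ :=
    exists_linearMap_lowerEnvelope_le hconst hadd hsmul ⟨u, hu⟩ z
  have le_L_of_mem (v : C(α, ℝ)) (hv : ⇑v ∈ S) : v z ≤ L v :=
    (le_lowerEnvelope hv le_rfl z).trans (le_L v)
  have L_nonneg (f : C(α, ℝ)) (hf : 0 ≤ f) : 0 ≤ L f :=
    (le_lowerEnvelope (hconst 0) hf z).trans (le_L f)
  have L_one : L 1 = 1 := by
    have one_le : 1 ≤ L 1 := le_L_of_mem 1 (hconst 1)
    have neg_one_le : -1 ≤ L (-1) := le_L_of_mem (-1) (hconst (-1))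
    rw [map_neg] at neg_one_le
    exact le_antisymm (neg_le_neg_iff.1 neg_one_le) one_le
  obtain ⟨μ, hμ, integral_eq⟩ := exists_isProbabilityMeasure_integral_eq L L_nonneg L_one
  exact ⟨μ, ⟨hμ, fun v hv => (le_L_of_mem ⟨v, hS v hv⟩ hv).trans_eq (integral_eq _).symm⟩,
    (integral_eq ⟨u, hu⟩).trans hLu⟩

/-- Edwards' theorem. -/
theorem isLeast_integral_lowerEnvelope (hu : Continuous u) (z : α) :
    IsLeast ((fun μ => ∫ x, u x ∂μ) '' {μ : Measure α | IsJensenMeasure S z μ})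
      (lowerEnvelope S u z) :=
  ⟨exists_isJensenMeasure_integral_eq_lowerEnvelope hS hconst hadd hsmul hu z,
    Set.forall_mem_image.2 fun _ hμ =>
      hμ.lowerEnvelope_le_integral hS hu (nonempty_minorants hconst hu)⟩

theorem isSSubharmonic_coe_iff_lowerEnvelope_eq (hu : Continuous u) :
    IsSSubharmonic S (fun x => (u x : EReal)) ↔ lowerEnvelope S u = u := by
  rw [isSSubharmonic_coe_iff hu]
  have hleast := isLeast_integral_lowerEnvelope hS hconst hadd hsmul hu
  constructor
  · intro hsub
    refine funext fun z => (lowerEnvelope_le_self (nonempty_minorants hconst hu) z).antisymm ?_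
    obtain ⟨μ, hμ, hint⟩ := (hleast z).1
    exact (hsub z μ hμ).trans_eq hint
  · intro henv z μ hμ
    rw [← congrFun henv z]
    exact (hleast z).2 ⟨μ, hμ, rfl⟩

end JensenDuality

section MonotoneApproximation

variable {α : Type*} {S : Set (α → ℝ)} {u : α → ℝ} {v : ℕ → α → ℝ}

lemma lowerEnvelope_eq_of_tendsto (hv : ∀ j, v j ∈ S) (hvu : ∀ j, v j ≤ u)
    (hlim : ∀ x, Tendsto (fun j => v j x) atTop (𝓝 (u x))) : lowerEnvelope S u = u := by
  refine funext fun x => (lowerEnvelope_le_self ⟨v 0, hv 0, hvu 0⟩ x).antisymm ?_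
  exact le_of_tendsto' (hlim x) fun j => le_lowerEnvelope (hv j) (hvu j) x

variable [TopologicalSpace α]

lemma lowerSemicontinuous_lowerEnvelope (hS : ∀ v ∈ S, LowerSemicontinuous v) (f : α → ℝ) :
    LowerSemicontinuous (lowerEnvelope S f) :=
  lowerSemicontinuous_ciSup (bddAbove_range_minorants S f) fun v => hS v.1 v.2.1

variable [CompactSpace α]

lemma tendstoUniformly_minorants (hS : ∀ v ∈ S, Continuous v) (hu : Continuous u)
    (henv : lowerEnvelope S u = u) :
    TendstoUniformly (fun v : ↥(S ∩ Set.Iic u) => v.1) u atTop := by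
  refine Monotone.tendstoUniformly_of_forall_tendsto (fun v => hS v.1 v.2.1)
    (fun _ _ hvw => hvw) hu fun x => ?_
  have hlim := tendsto_atTop_ciSup (f := fun v : ↥(S ∩ Set.Iic u) => v.1 x)
    (fun _ _ hvw => hvw x) (bddAbove_range_minorants S u x)
  rwa [← lowerEnvelope, henv] at hlim

lemma exists_minorant_sub_lt (hS : ∀ v ∈ S, Continuous v) (hsup : SupClosed S)
    (hu : Continuous u) (henv : lowerEnvelope S u = u) (hne : (S ∩ Set.Iic u).Nonempty)
    {ε : ℝ} (hε : 0 < ε) : ∃ v ∈ S, v ≤ u ∧ ∀ x, u x - ε < v x := by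
  have := hne.to_subtype
  have supClosed_Iic : SupClosed (Set.Iic u) := fun _ hv _ hw =>
    Set.mem_Iic.2 (sup_le hv hw)
  have : IsDirectedOrder ↥(S ∩ Set.Iic u) := (hsup.inter supClosed_Iic).directedOn.isDirectedOrder
  obtain ⟨v, hv⟩ :=
    (Metric.tendstoUniformly_iff.1 (tendstoUniformly_minorants hS hu henv) ε hε).exists
  exact ⟨v.1, v.2.1, v.2.2, fun x => sub_lt_comm.1 ((le_abs_self _).trans_lt (hv x))⟩

lemma exists_monotone_seq_tendsto (hS : ∀ v ∈ S, Continuous v) (hsup : SupClosed S)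
    (hu : Continuous u) (henv : lowerEnvelope S u = u) (hne : (S ∩ Set.Iic u).Nonempty) :
    ∃ v : ℕ → α → ℝ, (∀ j, v j ∈ S) ∧ (∀ x, Monotone fun j => v j x) ∧
      ∀ x, Tendsto (fun j => v j x) atTop (𝓝 (u x)) := by
  choose v v_mem v_le lt_v using fun j : ℕ =>
    exists_minorant_sub_lt hS hsup hu henv hne (Nat.one_div_pos_of_nat (α := ℝ) (n := j))
  refine ⟨partialSups v, fun j => hsup.finsetSup'_mem Finset.nonempty_Iic fun i _ => v_mem i,
    fun x _ _ hij => (partialSups v).monotone hij x, fun x => ?_⟩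
  have hlim : Tendsto (fun j : ℕ => u x - 1 / ((j : ℝ) + 1)) atTop (𝓝 (u x)) := by
    simpa using tendsto_const_nhds.sub (tendsto_one_div_add_atTop_nhds_zero_nat (𝕜 := ℝ))
  exact tendsto_of_tendsto_of_tendsto_of_le_of_le hlim tendsto_const_nhds
    (fun j => (lt_v j x).le.trans (le_partialSups v j x))
    (fun j => partialSups_le v j u (fun i _ => v_le i) x)

end MonotoneApproximation

theorem continuous_subharmonic_iff_increasing_approx_general {α : Type*} [TopologicalSpace α]
    [CompactSpace α] [T2Space α] [MeasurableSpace α] [BorelSpace α]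
    (S : Set (α → ℝ)) (hS : ∀ f ∈ S, Continuous f)
    (hconst : ∀ c : ℝ, (fun _ => c) ∈ S)
    (hadd : ∀ u ∈ S, ∀ v ∈ S, u + v ∈ S)
    (hsmul : ∀ u ∈ S, ∀ t : ℝ, 0 ≤ t → t • u ∈ S)
    (hmax : ∀ u ∈ S, ∀ v ∈ S, (fun x => max (u x) (v x)) ∈ S)
    (u : α → ℝ) (hu : UpperSemicontinuous u) :
    (Continuous u ∧ IsSSubharmonic S (fun x => ((u x : ℝ) : EReal))) ↔
      ∃ uj : ℕ → α → ℝ, (∀ j, uj j ∈ S) ∧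
        (∀ x, Monotone fun j => uj j x) ∧
        (∀ x, Tendsto (fun j => uj j x) atTop (𝓝 (u x))) := by
  have subharmonic_iff := isSSubharmonic_coe_iff_lowerEnvelope_eq hS hconst hadd hsmul (u := u)
  constructor
  · rintro ⟨hc, hsub⟩
    exact exists_monotone_seq_tendsto hS (fun v hv w hw => hmax v hv w hw) hc
      ((subharmonic_iff hc).1 hsub) (nonempty_minorants hconst hc)
  · rintro ⟨v, hv, hmono, hlim⟩
    have henv : lowerEnvelope S u = u :=
      lowerEnvelope_eq_of_tendsto hv (fun j x => (hmono x).ge_of_tendsto (hlim x) j) hlim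
    have hlsc : LowerSemicontinuous u :=
      henv ▸ lowerSemicontinuous_lowerEnvelope (fun v hv => (hS v hv).lowerSemicontinuous) u
    have hc : Continuous u := continuous_iff_lower_upperSemicontinuous.2 ⟨hlsc, hu⟩
    exact ⟨hc, (subharmonic_iff hc).2 henv⟩

/-- An upper semicontinuous `u : X → ℝ` is continuous and `S`-subharmonic on `X`
if and only if it is the pointwise increasing limit of a sequence of functions in `S`. -/
theorem continuous_subharmonic_iff_increasing_approx {n : ℕ}
    (X : Set (Fin n → ℂ)) (hX : IsCompact X)
    (S : Set (↥X → ℝ)) (hS : ∀ f ∈ S, Continuous f)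
    (hconst : ∀ c : ℝ, (fun _ => c) ∈ S)
    (hadd : ∀ u ∈ S, ∀ v ∈ S, u + v ∈ S)
    (hsmul : ∀ u ∈ S, ∀ t : ℝ, 0 ≤ t → t • u ∈ S)
    (hmax : ∀ u ∈ S, ∀ v ∈ S, (fun x => max (u x) (v x)) ∈ S)
    (u : ↥X → ℝ) (hu : UpperSemicontinuous u) :
    (Continuous u ∧ IsSSubharmonic S (fun x => ((u x : ℝ) : EReal))) ↔
      ∃ uj : ℕ → ↥X → ℝ, (∀ j, uj j ∈ S) ∧
        (∀ x, Monotone fun j => uj j x) ∧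
        (∀ x, Tendsto (fun j => uj j x) atTop (𝓝 (u x))) := by
  have := isCompact_iff_compactSpace.1 hX
  exact continuous_subharmonic_iff_increasing_approx_general S hS hconst hadd hsmul hmax u hu
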